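/- Assume s = 4, q = p, p ∤ (m/t), d | h, and a ≠ 0. Set a_0 = −(m/t)·a^{−1} ∈ F_p^*, and Q_{t,4} = p^{(t−1)/4}·π_4^{(t−1)/2}·χ̄_4(−a_0)·i^{i_0} if t ≡ 1 (mod 4), Q_{t,4} = (−1)^f·p^{(t−3)/4}·π_4^{(t+1)/2}·χ_4(−a_0)·i^{i_0} if t ≡ 3 (mod 4). Then: if (d,l) = (1,1) then N_t = (1/4)·( p^{t−1} + (−1)^{i_0}·( p^{(t−1)/2}·ρ(a_0) + 2·Re Q_{t,4} ) ); if (d,l) = (1,2) then N_t = (1/4)·( p^{t−1} + (−1)^{i_0}·p^{(t−2)/4}·( p^{(t−2)/4} − 2·ρ(a_0)·Re(π_4^{t/2}·i^{i_0}) ) ); if (d,l) = (1,4) then N_t = (1/4)·( p^{t−1} + (−1)^{i_0}·p^{(t−4)/4}·( p^{t/4} + 2·Re(π_4^{t/2}·i^{i_0}) ) ); if (d,l) = (2,1) then N_t = (1/2)·( p^{t−1} + (−1)^{i_0}·p^{(t−1)/2}·ρ(a_0) ); if (d,l) = (2,2) then N_t = (1/2)·( p^{t−1} + (−1)^{i_0}·p^{(t−2)/2}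 ); if (d,l) = (4,1) then N_t = p^{t−1}. -/

import Mathlib

noncomputable section

open Complex Polynomial Classical

/-- `N_t(a,s,h)`: the number of elements `x` of the subfield `F_{q^t}` of `K = F_{q^m}`
with `Tr_{K/F}(x) = a` and `N_{K/F}(x) ∈ g^h·⟨g^s⟩`. -/
def NN (F K : Type*) [Field F] [Fintype F] [Field K] [Fintype K] [Algebra F K]
    (g : F) (s h t : ℕ) (a : F) : ℕ :=
  Nat.card {x : K // x ^ (Fintype.card F) ^ t = x ∧ Algebra.trace F K x = a ∧
    ∃ k : ℕ, Algebra.norm F x = g ^ (h + s * k)}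

section HD
set_option linter.unusedSectionVars false
variable {F : Type*} [Field F] [Fintype F]

lemma monicFin (n : ℕ) : {f : F[X] | f.Monic ∧ f.natDegree = n}.Finite := by
  have : Function.Injective (fun f : {f : F[X] | f.Monic ∧ f.natDegree = n} =>
      (fun i : Fin (n+1) => (f : F[X]).coeff i)) := by
    rintro ⟨f, hf, hfn⟩ ⟨g, hg, hgn⟩ h
    ext i
    by_cases hi : i < n + 1
    · exact congrFun h ⟨i, hi⟩
    · rw [coeff_eq_zero_of_natDegree_lt (by dsimp only; omega),
        coeff_eq_zero_of_natDegree_lt (by dsimp only; omega)]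
  have := Finite.of_injective _ this
  exact Set.toFinite _

def MM (F : Type*) [Field F] [Fintype F] (n : ℕ) : Finset F[X] := (monicFin (F := F) n).toFinset

lemma mem_MM {n : ℕ} {f : F[X]} : f ∈ MM F n ↔ f.Monic ∧ f.natDegree = n := by simp [MM]

def II (F : Type*) [Field F] [Fintype F] (n : ℕ) : Finset F[X] := (MM F n).filter Irreducible

lemma mem_II {n : ℕ} {f : F[X]} : f ∈ II F n ↔ (f.Monic ∧ f.natDegree = n) ∧ Irreducible f := by
  simp [II, mem_MM]

variable (χ : MulChar F ℂ) (ψ : AddChar F ℂ)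

def lam (f : F[X]) : ℂ := χ ((-1) ^ f.natDegree * f.coeff 0) * ψ (- f.nextCoeff)

lemma lam_mul {f g : F[X]} (hf : f.Monic) (hg : g.Monic) :
    lam χ ψ (f * g) = lam χ ψ f * lam χ ψ g := by
  unfold lam
  rw [hf.natDegree_mul hg, hf.nextCoeff_mul hg, mul_coeff_zero, neg_add, AddChar.map_add_eq_mul,
    pow_add, mul_mul_mul_comm, map_mul]
  ring

lemma lam_one : lam χ ψ 1 = 1 := by
  simp [lam, nextCoeff]

lemma lam_pow {f : F[X]} (hf : f.Monic) (n : ℕ) :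
    lam χ ψ (f ^ n) = lam χ ψ f ^ n := by
  induction n with
  | zero => simp [lam_one]
  | succ n ih => rw [pow_succ, lam_mul χ ψ (hf.pow n) hf, ih, pow_succ]

def AA (n : ℕ) : ℂ := ∑ f ∈ MM F n, lam χ ψ f

def BB (k : ℕ) : ℂ := ∑ e ∈ k.divisors, ∑ P ∈ II F e, (e : ℂ) * lam χ ψ P ^ (k / e)

lemma AA_zero : AA χ ψ 0 = 1 := by
  have : MM F 0 = {1} := by
    ext f
    simp only [mem_MM, Finset.mem_singleton]
    constructor
    · rintro ⟨h1, h2⟩; exact eq_one_of_monic_natDegree_zero h1 h2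
    · rintro rfl; simp
  simp [AA, this, lam_one]

lemma AA_one : AA χ ψ 1 = gaussSum χ ψ := by
  unfold AA gaussSum
  symm
  refine Finset.sum_bij (fun a _ => X - C a) ?_ ?_ ?_ ?_
  · intro a _; simp [mem_MM, monic_X_sub_C]
  · intro a _ b _ h; simpa using h
  · intro f hf
    obtain ⟨h1, h2⟩ := mem_MM.1 hf
    refine ⟨- f.coeff 0, by simp, ?_⟩
    have := h1.as_sum
    rw [h2] at this
    simp at this
    rw [this]; simp
  · intro a _
    simp [lam, nextCoeff]

lemma AA_two {n : ℕ} (hn : 2 ≤ n) (hχ : χ ≠ 1) : AA χ ψ n = 0 := by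
  have key : ∀ c : F, AA χ ψ n = ∑ f ∈ MM F n, lam χ ψ (f + C c) := by
    intro c
    unfold AA
    symm
    have hdeg : ∀ (c : F) (f : F[X]), f ∈ MM F n → f + C c ∈ MM F n := by
      intro c f hf
      obtain ⟨h1, h2⟩ := mem_MM.1 hf
      refine mem_MM.2 ⟨h1.add_of_left ?_, ?_⟩
      · refine lt_of_le_of_lt degree_C_le ?_
        rw [← natDegree_pos_iff_degree_pos]; omega
      · rw [natDegree_add_C, h2]
    refine Finset.sum_bij' (fun f _ => f + C c) (fun f _ => f + C (-c)) (fun f hf => hdeg c f hf)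
      (fun f hf => hdeg _ f hf) ?_ ?_ ?_
    · intro f _; simp
    · intro f _; simp
    · intro f _; rfl
  have h2 : (Fintype.card F : ℂ) * AA χ ψ n = 0 := by
    calc (Fintype.card F : ℂ) * AA χ ψ n = ∑ c : F, AA χ ψ n := by simp
      _ = ∑ c : F, ∑ f ∈ MM F n, lam χ ψ (f + C c) := Finset.sum_congr rfl fun c _ => key c
      _ = ∑ f ∈ MM F n, ∑ c : F, lam χ ψ (f + C c) := Finset.sum_comm
      _ = 0 := by
        refine Finset.sum_eq_zero fun f hf => ?_
        obtain ⟨h1, h2⟩ := mem_MM.1 hf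
        have : ∀ c : F, lam χ ψ (f + C c) =
            χ ((-1) ^ n) * ψ (-f.nextCoeff) * χ (f.coeff 0 + c) := by
          intro c
          have hnc : (f + C c).nextCoeff = f.nextCoeff := by
            rw [nextCoeff_of_natDegree_pos (by rw [natDegree_add_C]; omega),
              nextCoeff_of_natDegree_pos (by omega), natDegree_add_C, coeff_add, coeff_C,
              if_neg (by omega), add_zero]
          unfold lam
          rw [hnc, natDegree_add_C, h2, map_mul]
          simp
          ring
        simp_rw [this]
        rw [← Finset.mul_sum, Fintype.sum_equiv (Equiv.addLeft (f.coeff 0)) _ (fun c => χ c)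
          (by intro c; simp), MulChar.sum_eq_zero_of_ne_one hχ, mul_zero]
  rcases mul_eq_zero.1 h2 with h | h
  · simp at h
  · exact h

lemma deg_count {n : ℕ} {f : F[X]} (hf : f ∈ MM F n) :
    n = ∑ e ∈ Finset.Icc 1 n, ∑ P ∈ II F e, ∑ j ∈ Finset.Icc 1 n, if P ^ j ∣ f then e else 0 := by
  obtain ⟨h1, h2⟩ := mem_MM.1 hf
  have hf0 := h1.ne_zero
  set s := UniqueFactorizationMonoid.normalizedFactors f with hs
  have hprod : s.prod = f := by
    have := UniqueFactorizationMonoid.prod_normalizedFactors_eq hf0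
    rw [h1.normalize_eq_self] at this
    exact this
  have hmon : ∀ P ∈ s, P.Monic := fun P hP => by
    have hn := UniqueFactorizationMonoid.normalize_normalized_factor P hP
    have h0 := (UniqueFactorizationMonoid.irreducible_of_normalized_factor P hP).ne_zero
    rw [← hn]; exact monic_normalize h0
  have hirr : ∀ P ∈ s, Irreducible P := 
    fun P hP => UniqueFactorizationMonoid.irreducible_of_normalized_factor P hP
  have hdeg : n = ∑ P ∈ s.toFinset, s.count P * P.natDegree := by
    rw [← h2]
    conv_lhs => rw [← hprod]
    rw [natDegree_multiset_prod_of_monic _ hmon, Finset.sum_multiset_map_count]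
    simp
  have hle : ∀ P ∈ s, P.natDegree ≤ n := fun P hP => by
    rw [← h2]; exact natDegree_le_of_dvd (UniqueFactorizationMonoid.dvd_of_mem_normalizedFactors hP) hf0
  have hcnt : ∀ P : F[X], P.Monic → Irreducible P → ∀ j, P ^ j ∣ f ↔ j ≤ s.count P := by
    intro P hP hPi j
    rw [UniqueFactorizationMonoid.dvd_iff_normalizedFactors_le_normalizedFactors
      (pow_ne_zero _ hP.ne_zero) hf0, UniqueFactorizationMonoid.normalizedFactors_pow,
      UniqueFactorizationMonoid.normalizedFactors_irreducible hPi, hP.normalize_eq_self,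
      Multiset.nsmul_singleton, ← Multiset.le_count_iff_replicate_le]
  have hcn : ∀ P : F[X], P.Monic → Irreducible P → s.count P ≤ n := by
    intro P hP hPi
    have h := (hcnt P hP hPi _).2 le_rfl
    have := natDegree_le_of_dvd h hf0
    rw [hP.natDegree_pow, h2] at this
    exact le_trans (Nat.le_mul_of_pos_right _ hPi.natDegree_pos) this
  have hin : ∀ e ∈ Finset.Icc 1 n, ∀ P ∈ II F e,
      (∑ j ∈ Finset.Icc 1 n, if P ^ j ∣ f then e else 0) = s.count P * P.natDegree := by
    intro e he P hP
    obtain ⟨⟨hPm, hPe⟩, hPi⟩ := mem_II.1 hP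
    simp_rw [hcnt P hPm hPi]
    rw [← Finset.sum_filter, Finset.sum_const, hPe, smul_eq_mul]
    congr 1
    have : Finset.filter (fun j => j ≤ s.count P) (Finset.Icc 1 n) = Finset.Icc 1 (s.count P) := by
      ext j
      have := hcn P hPm hPi
      simp only [Finset.mem_filter, Finset.mem_Icc]; omega
    rw [this]; simp
  rw [Finset.sum_congr rfl fun e he => Finset.sum_congr rfl fun P hP => hin e he P hP]
  rw [Finset.sum_sigma']
  symm
  refine Eq.trans ?_ hdeg.symm
  refine Finset.sum_bij_ne_zero (fun x _ _ => x.2) ?_ ?_ ?_ ?_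
  · rintro ⟨e, P⟩ h h'
    simp only [ne_eq, mul_eq_zero, not_or, Multiset.count_eq_zero, not_not] at h'
    simpa using h'.1
  · rintro ⟨e, P⟩ h h' ⟨e', P'⟩ h2 h2' heq
    dsimp only at heq
    subst heq
    simp only [Finset.mem_sigma, mem_II] at h h2
    obtain rfl : e = e' := by rw [← h.2.1.2, ← h2.2.1.2]
    rfl
  · intro P hP hP'
    have hP := Multiset.mem_toFinset.1 hP
    refine ⟨⟨P.natDegree, P⟩, ?_, hP', rfl⟩
    simp only [Finset.mem_sigma, mem_II, Finset.mem_Icc]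
    exact ⟨⟨(hirr P hP).natDegree_pos, hle P hP⟩, ⟨hmon P hP, trivial⟩, hirr P hP⟩
  · rintro ⟨e, P⟩ h h'; rfl

lemma sum_dvd {n e j : ℕ} {P : F[X]} (hP : P.Monic) (hPe : P.natDegree = e) :
    ∑ f ∈ MM F n with P ^ j ∣ f, lam χ ψ f =
      if j * e ≤ n then lam χ ψ P ^ j * AA χ ψ (n - j * e) else 0 := by
  split_ifs with h
  · unfold AA
    rw [Finset.mul_sum]
    symm
    refine Finset.sum_bij (fun f _ => P ^ j * f) ?_ ?_ ?_ ?_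
    · intro f hf
      obtain ⟨h1, h2⟩ := mem_MM.1 hf
      rw [Finset.mem_filter, mem_MM]
      refine ⟨⟨(hP.pow j).mul h1, ?_⟩, dvd_mul_right _ _⟩
      rw [(hP.pow j).natDegree_mul h1, hP.natDegree_pow, hPe, h2]; omega
    · intro f _ g _ hfg
      exact mul_left_cancel₀ (pow_ne_zero _ hP.ne_zero) hfg
    · intro f hf
      rw [Finset.mem_filter, mem_MM] at hf
      obtain ⟨⟨h1, h2⟩, g, rfl⟩ := hf
      have hg : g.Monic := (hP.pow j).of_mul_monic_left h1
      refine ⟨g, mem_MM.2 ⟨hg, ?_⟩, rfl⟩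
      rw [(hP.pow j).natDegree_mul hg, hP.natDegree_pow, hPe] at h2; omega
    · intro f hf
      obtain ⟨h1, h2⟩ := mem_MM.1 hf
      rw [lam_mul χ ψ (hP.pow j) h1, lam_pow χ ψ hP]
  · refine Finset.sum_eq_zero fun f hf => ?_
    rw [Finset.mem_filter, mem_MM] at hf
    obtain ⟨⟨h1, h2⟩, hd⟩ := hf
    have := natDegree_le_of_dvd hd h1.ne_zero
    rw [hP.natDegree_pow, hPe] at this; omega

lemma newton (n : ℕ) : (n : ℂ) * AA χ ψ n =
    ∑ k ∈ Finset.Icc 1 n, BB χ ψ k * AA χ ψ (n - k) := by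
  have e1 : (n : ℂ) * AA χ ψ n = ∑ e ∈ Finset.Icc 1 n, ∑ P ∈ II F e, ∑ j ∈ Finset.Icc 1 n,
      if j * e ≤ n then (e : ℂ) * (lam χ ψ P ^ j * AA χ ψ (n - j * e)) else 0 := by
    calc (n : ℂ) * AA χ ψ n = ∑ f ∈ MM F n, ∑ e ∈ Finset.Icc 1 n, ∑ P ∈ II F e,
          ∑ j ∈ Finset.Icc 1 n, if P ^ j ∣ f then (e : ℂ) * lam χ ψ f else 0 := by
          unfold AA
          rw [Finset.mul_sum]
          refine Finset.sum_congr rfl fun f hf => ?_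
          have := congrArg (Nat.cast : ℕ → ℂ) (deg_count hf)
          rw [this]
          push_cast
          simp_rw [Finset.sum_mul, ite_mul, zero_mul]
      _ = _ := by
          rw [Finset.sum_comm]
          refine Finset.sum_congr rfl fun e he => ?_
          rw [Finset.sum_comm]
          refine Finset.sum_congr rfl fun P hP => ?_
          rw [Finset.sum_comm]
          refine Finset.sum_congr rfl fun j hj => ?_
          obtain ⟨⟨hPm, hPe⟩, hPi⟩ := mem_II.1 hP
          rw [← Finset.sum_filter, ← Finset.mul_sum, sum_dvd χ ψ hPm hPe]
          split_ifs <;> simp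
  rw [e1]
  have e2 : ∀ e ∈ Finset.Icc 1 n, (∑ P ∈ II F e, ∑ j ∈ Finset.Icc 1 n,
      if j * e ≤ n then (e : ℂ) * (lam χ ψ P ^ j * AA χ ψ (n - j * e)) else 0) =
      ∑ k ∈ Finset.Icc 1 n, if e ∣ k then
        (∑ P ∈ II F e, (e : ℂ) * lam χ ψ P ^ (k / e)) * AA χ ψ (n - k) else 0 := by
    intro e he
    have he1 := (Finset.mem_Icc.1 he).1
    rw [Finset.sum_comm, ← Finset.sum_filter]
    simp_rw [Finset.sum_ite_irrel, Finset.sum_const_zero]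
    rw [← Finset.sum_filter]
    refine Finset.sum_bij (fun j _ => j * e) ?_ ?_ ?_ ?_
    · intro j hj
      simp only [Finset.mem_filter, Finset.mem_Icc] at hj ⊢
      exact ⟨⟨Nat.mul_pos hj.1.1 he1, hj.2⟩, dvd_mul_left _ _⟩
    · intro j _ j' _ h
      exact Nat.eq_of_mul_eq_mul_right he1 h
    · intro k hk
      simp only [Finset.mem_filter, Finset.mem_Icc] at hk
      obtain ⟨⟨hk1, hk2⟩, j, rfl⟩ := hk
      refine ⟨j, ?_, mul_comm _ _⟩
      simp only [Finset.mem_filter, Finset.mem_Icc]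
      refine ⟨⟨?_, ?_⟩, by rwa [mul_comm]⟩
      · rcases Nat.eq_zero_or_pos j with rfl | h
        · simp at hk1
        · exact h
      · exact le_trans (Nat.le_mul_of_pos_left _ he1) hk2
    · intro j hj
      rw [Nat.mul_div_cancel _ he1, Finset.sum_mul]
      exact Finset.sum_congr rfl fun P _ => by ring
  rw [Finset.sum_congr rfl e2, Finset.sum_comm]
  refine Finset.sum_congr rfl fun k hk => ?_
  obtain ⟨hk1, hk2⟩ := Finset.mem_Icc.1 hk
  unfold BB
  rw [Finset.sum_mul, ← Finset.sum_filter]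
  refine Finset.sum_congr ?_ fun _ _ => rfl
  ext e
  simp only [Finset.mem_filter, Finset.mem_Icc, Nat.mem_divisors]
  constructor
  · rintro ⟨_, h⟩; exact ⟨h, by omega⟩
  · rintro ⟨h, _⟩; exact ⟨⟨Nat.pos_of_dvd_of_pos h hk1, (Nat.le_of_dvd hk1 h).trans hk2⟩, h⟩

lemma BB_eq (hχ : χ ≠ 1) (n : ℕ) : BB χ ψ (n + 1) = (-1) ^ n * gaussSum χ ψ ^ (n + 1) := by
  induction n with
  | zero =>
    have := newton χ ψ 1
    simp [AA_one, AA_zero] at this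
    simp [this]
  | succ n ih =>
    have h := newton χ ψ (n + 2)
    rw [AA_two χ ψ (by omega) hχ, mul_zero, Finset.sum_Icc_succ_top (by omega),
      Finset.sum_Icc_succ_top (by omega), Finset.sum_eq_zero] at h
    · simp only [show n + 2 - (n + 1) = 1 by omega, show n + 1 + 1 = n + 2 by omega,
        Nat.sub_self, AA_zero, AA_one, ih] at h
      rw [show n + 1 + 1 = n + 2 by omega]
      linear_combination -h
    · intro k hk
      have := Finset.mem_Icc.1 hk
      rw [AA_two χ ψ (by omega) hχ, mul_zero]

lemma lam_minpoly {L : Type*} [Field L] [Fintype L] [Algebra F L] (x : L) :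
    χ (Algebra.norm F x) * ψ (Algebra.trace F L x) =
      lam χ ψ (minpoly F x) ^ (Module.finrank F L / (minpoly F x).natDegree) := by
  have hi : IsIntegral F x := Algebra.IsIntegral.isIntegral x
  have hfin := IntermediateField.adjoin.finrank hi
  have hmul := Module.finrank_mul_finrank F (IntermediateField.adjoin F {x}) L
  have hpos : 0 < (minpoly F x).natDegree := minpoly.natDegree_pos hi
  have hk : Module.finrank F L / (minpoly F x).natDegree =
      Module.finrank (IntermediateField.adjoin F {x}) L := by
    rw [← hmul, hfin, Nat.mul_div_cancel_left _ hpos]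
  rw [hk]
  have htr := trace_eq_finrank_mul_minpoly_nextCoeff F x
  have hno : Algebra.norm F x = ((-1) ^ (minpoly F x).natDegree * (minpoly F x).coeff 0) ^
      Module.finrank (IntermediateField.adjoin F {x}) L := by
    rw [Algebra.norm_eq_norm_adjoin]
    congr 1
    have := Algebra.PowerBasis.norm_gen_eq_coeff_zero_minpoly (IntermediateField.adjoin.powerBasis hi)
    rw [IntermediateField.adjoin.powerBasis_gen, IntermediateField.adjoin.powerBasis_dim,
      IntermediateField.minpoly_gen] at this
    exact this
  rw [htr, hno]
  unfold lam
  rw [map_pow, mul_pow, ← AddChar.map_nsmul_eq_pow, nsmul_eq_mul, mul_neg]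

lemma BB_field {L : Type*} [Field L] [Fintype L] [Algebra F L] :
    ∑ x : L, χ (Algebra.norm F x) * ψ (Algebra.trace F L x) = BB χ ψ (Module.finrank F L) := by
  set t := Module.finrank F L with ht
  have ht0 : 0 < t := Module.finrank_pos
  unfold BB
  rw [Finset.sum_sigma']
  have hmap : ∀ x ∈ (Finset.univ : Finset L), (⟨(minpoly F x).natDegree, minpoly F x⟩ : (_ : ℕ) × F[X])
      ∈ t.divisors.sigma (II F) := by
    intro x _
    have hi : IsIntegral F x := Algebra.IsIntegral.isIntegral x
    simp only [Finset.mem_sigma, Nat.mem_divisors, mem_II]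
    exact ⟨⟨minpoly.degree_dvd hi, ht0.ne'⟩, ⟨minpoly.monic hi, trivial⟩, minpoly.irreducible hi⟩
  rw [← Finset.sum_fiberwise_of_maps_to hmap]
  refine Finset.sum_congr rfl ?_
  rintro ⟨e, P⟩ h
  simp only [Finset.mem_sigma, Nat.mem_divisors, mem_II] at h
  obtain ⟨⟨hd, -⟩, ⟨hPm, hPe⟩, hPi⟩ := h
  have hfilt : (Finset.univ.filter fun x : L =>
      (⟨(minpoly F x).natDegree, minpoly F x⟩ : (_ : ℕ) × F[X]) = ⟨e, P⟩) =
      (P.rootSet L).toFinset := by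
    ext x
    simp only [Finset.mem_filter, Finset.mem_univ, true_and, Set.mem_toFinset, mem_rootSet]
    constructor
    · intro h
      simp only [Sigma.mk.injEq, heq_eq_eq] at h
      rw [← h.2]
      exact ⟨minpoly.ne_zero (Algebra.IsIntegral.isIntegral x), minpoly.aeval _ _⟩
    · rintro ⟨_, h⟩
      have := minpoly.eq_of_irreducible_of_monic hPi h hPm
      rw [← this, hPe]
  rw [hfilt]
  have hcard : (P.rootSet L).toFinset.card = e := by
    rw [Set.toFinset_card, card_rootSet_eq_natDegree, hPe]
    · exact PerfectField.separable_of_irreducible hPi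
    · rw [← hPe] at hd
      have hdv := hPi.natDegree_dvd_iff_dvd_X_pow_card_pow_sub_X.1 hd
      have hcd : Nat.card F ^ t = Fintype.card L := by
        rw [Nat.card_eq_fintype_card, ht, ← Module.card_eq_pow_finrank]
      rw [hcd] at hdv
      have := (FiniteField.isSplittingField_sub L F).splits
      refine Splits.of_dvd this ?_ (Polynomial.map_dvd _ hdv)
      rw [Ne, Polynomial.map_eq_zero]
      exact FiniteField.X_pow_card_sub_X_ne_zero _ Fintype.one_lt_card
  rw [Finset.sum_congr rfl (g := fun _ => lam χ ψ P ^ (t / e)), Finset.sum_const, hcard,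
    nsmul_eq_mul]
  intro x hx
  rw [← hfilt] at hx
  simp only [Finset.mem_filter, Sigma.mk.injEq, heq_eq_eq] at hx
  rw [lam_minpoly, hx.2.2, hPe]

theorem hasse_davenport {L : Type*} [Field L] [Fintype L] [Algebra F L] (hχ : χ ≠ 1) {t : ℕ}
    (ht : Module.finrank F L = t) :
    ∑ x : L, χ (Algebra.norm F x) * ψ (Algebra.trace F L x) =
      (-1) ^ (t - 1) * gaussSum χ ψ ^ t := by
  have ht0 : 0 < t := ht ▸ Module.finrank_pos
  obtain ⟨n, rfl⟩ := Nat.exists_eq_succ_of_ne_zero ht0.ne'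
  rw [BB_field, ht, BB_eq χ ψ hχ]; simp

end HD

lemma int_arith {p α β a b : ℤ} (hp : 0 < p) (h1 : a ^ 2 + b ^ 2 = p) (h2 : α ^ 2 + β ^ 2 = p)
    (hu : p ∣ α * a + β * b) (hv : p ∣ α * b - β * a) (hβ : β % 2 = 0) (ha : a % 2 = 1)
    (hb : b % 2 = 0) (h4 : (α + β) % 4 = (a + b) % 4) : α = a ∧ β = b := by
  obtain ⟨k, hk⟩ := hu
  obtain ⟨j, hj⟩ := hv
  have hkj : k ^ 2 + j ^ 2 = 1 := by
    have : p ^ 2 * (k ^ 2 + j ^ 2) = p ^ 2 * 1 := by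
      have : (α * a + β * b) ^ 2 + (α * b - β * a) ^ 2 = (a ^ 2 + b ^ 2) * (α ^ 2 + β ^ 2) := by ring
      rw [hk, hj, h1, h2] at this
      linear_combination this
    exact mul_left_cancel₀ (pow_ne_zero 2 hp.ne') this
  have hα : α = a * k + b * j := mul_left_cancel₀ hp.ne' (by
    linear_combination a * hk + b * hj - α * h1)
  have hβ' : β = b * k - a * j := mul_left_cancel₀ hp.ne' (by
    linear_combination b * hk - a * hj - β * h1)
  have k1 : k ≤ 1 := by nlinarith
  have k2 : -1 ≤ k := by nlinarith
  have j1 : j ≤ 1 := by nlinarith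
  have j2 : -1 ≤ j := by nlinarith
  interval_cases k <;> interval_cases j <;> omega

section
set_option linter.unusedSectionVars false
variable {p f : ℕ} [Fact p.Prime] (hp : p = 4 * f + 1) (g : (ZMod p)ˣ)
  (hg : ∀ u : (ZMod p)ˣ, u ∈ Subgroup.zpowers g)
include hp hg

lemma f_pos : 0 < f := by
  rcases Nat.eq_zero_or_pos f with rfl | h
  · have := (Fact.out : p.Prime).two_le; omega
  · exact h

lemma order_g : orderOf g = 4 * f := by
  rw [orderOf_eq_card_of_forall_mem_zpowers hg, Nat.card_eq_fintype_card, ZMod.card_units_eq_totient,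
    Nat.totient_prime Fact.out]; omega

lemma g2f : (g : ZMod p) ^ (2 * f) = -1 := by
  have hf := f_pos hp g hg
  have h1 : ((g : ZMod p) ^ (2 * f)) ^ 2 = 1 := by
    rw [← pow_mul, show 2 * f * 2 = orderOf g by rw [order_g hp g hg]; ring, ← Units.val_pow_eq_pow_val,
      pow_orderOf_eq_one, Units.val_one]
  rcases (sq_eq_sq_iff_eq_or_eq_neg.1 (h1.trans (one_pow 2).symm)) with h | h
  · exfalso
    have : g ^ (2 * f) = 1 := by ext; simpa using h
    have := orderOf_dvd_of_pow_eq_one this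
    rw [order_g hp g hg] at this
    have := Nat.le_of_dvd (by omega) this
    omega
  · exact h

lemma ringChar_ne : ringChar (ZMod p) ≠ 2 := by
  rw [ZMod.ringChar_zmod_n]; omega

lemma quad_g : quadraticChar (ZMod p) (g : ZMod p) = -1 := by
  have h := quadraticChar_eq_pow_of_char_ne_two' (ringChar_ne hp g hg) (g : ZMod p)
  rw [ZMod.card, show p / 2 = 2 * f by omega, g2f hp g hg] at h
  rcases quadraticChar_dichotomy g.ne_zero with h1 | h1
  · rw [h1] at h
    exfalso
    have : (-1 : ZMod p) ≠ 1 := Ring.neg_one_ne_one_of_char_ne_two (ringChar_ne hp g hg)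
    exact this (by simpa using h.symm)
  · exact h1

lemma sq_char {R : Type*} [CommRing R] (χ : MulChar (ZMod p) R) (h : (χ g) ^ 2 = -1) :
    χ ^ 2 = (quadraticChar (ZMod p)).ringHomComp (Int.castRingHom R) := by
  rw [MulChar.eq_iff hg, MulChar.pow_apply_coe, h, MulChar.ringHomComp_apply, quad_g hp g hg]
  simp

lemma quad_two : quadraticChar (ZMod p) 2 = (-1) ^ f := by
  have h2 : (2 : ZMod p) ≠ 0 := Ring.two_ne_zero (ringChar_ne hp g hg)
  rcases Nat.even_or_odd f with h | h
  · rw [h.neg_one_pow, quadraticChar_one_iff_isSquare h2, ZMod.exists_sq_eq_two_iff (by omega)]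
    obtain ⟨k, rfl⟩ := h
    omega
  · rw [h.neg_one_pow, quadraticChar_neg_one_iff_not_isSquare, ZMod.exists_sq_eq_two_iff (by omega)]
    obtain ⟨k, rfl⟩ := h
    omega

lemma jac_phi (φ : GaussianInt →+* ZMod p) (χ : MulChar (ZMod p) GaussianInt)
    (h : φ (χ g) = (g : ZMod p) ^ f) : φ (jacobiSum χ χ) = 0 := by
  have hf := f_pos hp g hg
  have hx : ∀ x : ZMod p, φ (χ x) = x ^ f := by
    intro x
    by_cases hx : x = 0
    · subst hx
      rw [MulChar.map_zero, map_zero, zero_pow hf.ne']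
    · have hu : x = ((Units.mk0 x hx : (ZMod p)ˣ) : ZMod p) := rfl
      obtain ⟨n, hn⟩ := (Submonoid.mem_powers_iff _ _).1 ((mem_powers_iff_mem_zpowers).2 (hg (Units.mk0 x hx)))
      rw [hu, ← hn, Units.val_pow_eq_pow_val, map_pow, map_pow, h]
      ring
  unfold jacobiSum
  rw [map_sum]
  have : ∀ x : ZMod p, φ (χ x * χ (1 - x)) =
      ∑ k ∈ Finset.range (f + 1), ((-1) ^ k * (f.choose k : ZMod p)) * x ^ (f + k) := by
    intro x
    rw [map_mul, hx, hx, sub_eq_neg_add, add_pow, Finset.mul_sum]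
    refine Finset.sum_congr rfl fun k _ => ?_
    rw [neg_pow]; ring
  simp_rw [this]
  rw [Finset.sum_comm]
  refine Finset.sum_eq_zero fun k hk => ?_
  rw [← Finset.mul_sum, FiniteField.sum_pow_lt_card_sub_one, mul_zero]
  rw [ZMod.card]
  have := Finset.mem_range.1 hk
  omega

lemma jac_unit (χ : MulChar (ZMod p) GaussianInt) (h : χ g = ⟨0, 1⟩) {x : ZMod p} (hx : x ≠ 0) :
    χ x ∈ ({⟨1, 0⟩, ⟨0, 1⟩, ⟨-1, 0⟩, ⟨0, -1⟩} : Set GaussianInt) := by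
  have hu : x = ((Units.mk0 x hx : (ZMod p)ˣ) : ZMod p) := rfl
  obtain ⟨n, hn⟩ := (Submonoid.mem_powers_iff _ _).1 ((mem_powers_iff_mem_zpowers).2 (hg (Units.mk0 x hx)))
  rw [hu, ← hn, Units.val_pow_eq_pow_val, map_pow, h]
  clear hn
  induction n with
  | zero => left; ext <;> simp
  | succ n ih =>
    rw [pow_succ]
    simp only [Set.mem_insert_iff, Set.mem_singleton_iff] at ih ⊢
    rcases ih with ih | ih | ih | ih <;> rw [ih] <;> simp [Zsqrtd.ext_iff]

lemma jac_gen (A : Type*) [AddCommGroup A] (w : GaussianInt →+ A) (c : A)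
    (hw : ∀ u ∈ ({⟨1, 0⟩, ⟨0, 1⟩, ⟨-1, 0⟩, ⟨0, -1⟩} : Set GaussianInt), (w u - c) + (w u - c) = 0)
    (χ : MulChar (ZMod p) GaussianInt) (h : χ g = ⟨0, 1⟩) :
    w (jacobiSum χ χ) = w (((-1) ^ f : ℤ) : GaussianInt) + (p - 3) • c := by
  have h2 : (2 : ZMod p) ≠ 0 := Ring.two_ne_zero (ringChar_ne hp g hg)
  have hunit : ∀ x : ZMod p, x ≠ 0 → x ≠ 1 → χ x * χ (1 - x) ∈
      ({⟨1, 0⟩, ⟨0, 1⟩, ⟨-1, 0⟩, ⟨0, -1⟩} : Set GaussianInt) := by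
    intro x h0 h1
    have e1 := jac_unit hp g hg χ h h0
    have e2 := jac_unit hp g hg χ h (sub_ne_zero.2 h1.symm)
    simp only [Set.mem_insert_iff, Set.mem_singleton_iff] at e1 e2 ⊢
    rcases e1 with e1 | e1 | e1 | e1 <;> rcases e2 with e2 | e2 | e2 | e2 <;>
      rw [e1, e2] <;> simp [Zsqrtd.ext_iff]
  have hhalf : χ (2⁻¹) * χ (1 - 2⁻¹) = (((-1) ^ f : ℤ) : GaussianInt) := by
    have e : (1 : ZMod p) - 2⁻¹ = 2⁻¹ := by field_simp; norm_num
    rw [e, ← sq, ← MulChar.pow_apply' _ two_ne_zero, sq_char hp g hg χ (by rw [h]; ext <;> simp [sq]),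
      MulChar.ringHomComp_apply, ← MulChar.inv_apply', (quadraticChar_isQuadratic (ZMod p)).inv, quad_two hp g hg]
    simp
  have hh0 : (2⁻¹ : ZMod p) ≠ 0 := inv_ne_zero h2
  have hh1 : (2⁻¹ : ZMod p) ≠ 1 := by
    intro h
    rw [inv_eq_one] at h
    have h1 : (1 : ZMod p) = 0 := by linear_combination h
    exact one_ne_zero h1
  set S : Finset (ZMod p) := Finset.univ \ {0, 1, 2⁻¹} with hS
  have hc3 : ({0, 1, 2⁻¹} : Finset (ZMod p)).card = 3 := by
    rw [Finset.card_eq_three]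
    exact ⟨0, 1, 2⁻¹, zero_ne_one, hh0.symm, hh1.symm, rfl⟩
  have hcard : S.card = p - 3 := by
    rw [hS, Finset.card_sdiff_of_subset (Finset.subset_univ _), hc3, Finset.card_univ, ZMod.card]
  have hmem : ∀ x, x ∈ S ↔ x ≠ 0 ∧ x ≠ 1 ∧ x ≠ 2⁻¹ := by intro x; simp [hS]
  have hinv : ∑ x ∈ S, (w (χ x * χ (1 - x)) - c) = 0 := by
    refine Finset.sum_involution (fun x _ => 1 - x) ?_ ?_ ?_ ?_
    · intro x hx
      rw [hmem] at hx
      rw [sub_sub_cancel, mul_comm (χ (1 - x))]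
      exact hw _ (hunit x hx.1 hx.2.1)
    · intro x hx _ he
      rw [hmem] at hx
      apply hx.2.2
      refine eq_inv_of_mul_eq_one_left ?_
      linear_combination -he
    · intro x hx
      rw [hmem] at hx ⊢
      refine ⟨sub_ne_zero.2 hx.2.1.symm, ?_, ?_⟩
      · intro he; apply hx.1; linear_combination -he
      · intro he; apply hx.2.2
        have e : (1 : ZMod p) - 2⁻¹ = 2⁻¹ := by field_simp; norm_num
        linear_combination e - he
    · intro x _; ring
  rw [Finset.sum_sub_distrib, Finset.sum_const, hcard, sub_eq_zero] at hinv
  unfold jacobiSum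
  rw [map_sum, ← Finset.sum_sdiff (Finset.subset_univ {0, 1, (2⁻¹ : ZMod p)}), hinv,
    Finset.sum_insert (by simp [hh0.symm]), Finset.sum_insert (by simp [hh1.symm]),
    Finset.sum_singleton, hhalf, sub_self, MulChar.map_zero]
  simp [add_comm]

lemma jac_val (χ4 : MulChar (ZMod p) ℂ) (hχ4g : χ4 (g : ZMod p) = Complex.I)
    (a4 b4 : ℤ) (hab : a4 ^ 2 + b4 ^ 2 = (p : ℤ))
    (ha4 : a4 ≡ -legendreSym p 2 [ZMOD 4])
    (hb4 : (b4 : ZMod p) = (a4 : ZMod p) * (g : ZMod p) ^ ((p - 1) / 4)) :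
    jacobiSum χ4 χ4 = (-1 : ℂ) ^ f * ((a4 : ℂ) + Complex.I * (b4 : ℂ)) := by
  have hf := f_pos hp g hg
  rw [show (p - 1) / 4 = f by omega] at hb4
  have hι : (g : ZMod p) ^ f * (g : ZMod p) ^ f = -1 := by
    rw [← pow_add, ← two_mul, g2f hp g hg]
  let ζ : GaussianIntˣ := ⟨⟨0, 1⟩, ⟨0, -1⟩, by ext <;> simp, by ext <;> simp⟩
  have hζ : ζ ∈ rootsOfUnity (Fintype.card (ZMod p)ˣ) GaussianInt := by
    rw [_root_.mem_rootsOfUnity, ZMod.card_units_eq_totient, Nat.totient_prime Fact.out,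
      show p - 1 = 4 * f by omega, pow_mul]
    have : ζ ^ 4 = 1 := by ext <;> simp [ζ, pow_succ]
    rw [this, one_pow]
  let χ : MulChar (ZMod p) GaussianInt := MulChar.ofRootOfUnity hζ hg
  have hχ : χ g = ⟨0, 1⟩ := MulChar.ofRootOfUnity_spec hζ hg
  have hχ4 : χ4 = χ.ringHomComp GaussianInt.toComplex := by
    rw [MulChar.eq_iff hg, MulChar.ringHomComp_apply, hχ, hχ4g]
    simp [GaussianInt.toComplex_def]
  have hJ : jacobiSum χ4 χ4 = GaussianInt.toComplex (jacobiSum χ χ) := by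
    rw [hχ4, jacobiSum_ringHomComp]
  have hne : χ4 * χ4 ≠ 1 := by
    intro h
    have : (χ4 * χ4) g = (1 : MulChar (ZMod p) ℂ) g := by rw [h]
    rw [MulChar.mul_apply, hχ4g, MulChar.one_apply_coe] at this
    norm_num at this
  have hne1 : χ4 ≠ 1 := by rintro rfl; simp at hne
  set J := jacobiSum χ χ with hJd
  have hnorm : J.re ^ 2 + J.im ^ 2 = (p : ℤ) := by
    have h := jacobiSum_mul_jacobiSum_inv (F := ZMod p) (F' := ℂ) (by
      rw [ZMod.ringChar_zmod_n, ringChar.eq_zero]; omega) hne1 hne1 hne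
    have hs : jacobiSum χ4⁻¹ χ4⁻¹ = star (jacobiSum χ4 χ4) := by
      unfold jacobiSum
      rw [star_sum]
      refine Finset.sum_congr rfl fun x _ => ?_
      rw [star_mul', MulChar.star_apply', MulChar.star_apply']
    rw [hs, hJ, ZMod.card] at h
    have h' : ((J.re ^ 2 + J.im ^ 2 : ℤ) : ℂ) = ((p : ℤ) : ℂ) := by
      rw [GaussianInt.toComplex_def] at h
      simp only [star_add, star_mul', Complex.star_def, Complex.conj_I, map_intCast] at h
      push_cast
      linear_combination h + (J.im : ℂ)^2 * Complex.I_sq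
    exact_mod_cast h'
  let φ : GaussianInt →+* ZMod p := Zsqrtd.lift ⟨(g : ZMod p) ^ f, by rw [hι]; simp⟩
  have hφ : ∀ z : GaussianInt, φ z = z.re + z.im * (g : ZMod p) ^ f := by
    intro z; simp [φ, Zsqrtd.lift]
  have hφJ := jac_phi hp g hg φ χ (by rw [hφ, hχ]; simp)
  rw [← hJd, hφ] at hφJ
  have h4 : ((J.re + J.im : ℤ) : ZMod 4) = (((((-1) ^ f : ℤ) : GaussianInt).re +
      (((-1) ^ f : ℤ) : GaussianInt).im : ℤ) : ZMod 4) + (p - 3) • 1 := jac_gen hp g hg (ZMod 4)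
    ((Int.castAddHom (ZMod 4)).comp ⟨⟨fun z : GaussianInt => z.re + z.im, by simp⟩,
      by intro x y; simp; ring⟩) 1 (by
      intro u hu
      simp only [Set.mem_insert_iff, Set.mem_singleton_iff] at hu
      rcases hu with rfl | rfl | rfl | rfl <;> simp <;> decide) χ hχ
  have h2 : ((J.im : ℤ) : ZMod 2) = (((((-1) ^ f : ℤ) : GaussianInt).im : ℤ) : ZMod 2) +
      (p - 3) • 0 := jac_gen hp g hg (ZMod 2)
    ((Int.castAddHom (ZMod 2)).comp ⟨⟨fun z : GaussianInt => z.im, by simp⟩,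
      by intro x y; simp⟩) 0 (by
      intro u hu
      simp only [Set.mem_insert_iff, Set.mem_singleton_iff] at hu
      rcases hu with rfl | rfl | rfl | rfl <;> simp <;> decide) χ hχ
  rw [Zsqrtd.re_intCast, Zsqrtd.im_intCast, add_zero, nsmul_eq_mul, mul_one, ← Int.cast_natCast,
    ← Int.cast_add, ZMod.intCast_eq_intCast_iff] at h4
  rw [Zsqrtd.im_intCast, nsmul_zero, add_zero, ZMod.intCast_eq_intCast_iff] at h2
  have hleg : legendreSym p 2 = (-1) ^ f := by
    have := quad_two hp g hg
    unfold legendreSym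
    rw [← this]; norm_num
  rw [hleg] at ha4
  have hε : ((-1 : ℤ) ^ f = 1 ∧ f % 2 = 0) ∨ ((-1 : ℤ) ^ f = -1 ∧ f % 2 = 1) := by
    rcases Nat.even_or_odd f with h | h
    · exact Or.inl ⟨h.neg_one_pow, Nat.even_iff.1 h⟩
    · exact Or.inr ⟨h.neg_one_pow, Nat.odd_iff.1 h⟩
  have hεC : (-1 : ℂ) ^ f = (((-1 : ℤ) ^ f : ℤ) : ℂ) := by push_cast; rfl
  rw [hεC]
  generalize (-1 : ℤ) ^ f = ε at *
  have hε2 : ε ^ 2 = 1 := by rcases hε with h | h <;> rw [h.1] <;> norm_num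
  simp only [Int.ModEq] at h2 h4 ha4
  have hao : a4 % 2 = 1 := by rcases hε with h | h <;> rw [h.1] at ha4 <;> omega
  have hb : b4 % 4 = 2 * (f : ℤ) % 4 := by
    have hb2 : b4 % 2 = 0 := by
      by_contra hb
      have e1 : a4 ^ 2 % 4 = 1 := by
        obtain ⟨c, hc⟩ : ∃ c, a4 = 2 * c + 1 := ⟨a4 / 2, by omega⟩
        rw [hc]; ring_nf; omega
      have e2 : b4 ^ 2 % 4 = 1 := by
        obtain ⟨c, hc⟩ : ∃ c, b4 = 2 * c + 1 := ⟨b4 / 2, by omega⟩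
        rw [hc]; ring_nf; omega
      omega
    obtain ⟨c, rfl⟩ : ∃ c, b4 = 2 * c := ⟨b4 / 2, by omega⟩
    obtain ⟨e, rfl⟩ : ∃ e, a4 = 2 * e + 1 := ⟨a4 / 2, by omega⟩
    have h3 : e * (e + 1) + c * c = f := by
      rw [hp] at hab; push_cast at hab; linarith
    have h5 : e * (e + 1) % 2 = 0 := Int.even_iff.1 (Int.even_mul_succ_self e)
    have h6 : c * c % 2 = c % 2 := by
      rcases Int.emod_two_eq_zero_or_one c with h | h <;> rw [Int.mul_emod, h] <;> norm_num
    omega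
  have hdvd : ∀ z : ℤ, (z : ZMod p) = 0 → (p : ℤ) ∣ z := fun z hz =>
    (ZMod.intCast_zmod_eq_zero_iff_dvd z p).1 hz
  have hre : (J.re : ZMod p) = - (J.im * (g : ZMod p) ^ f) := by linear_combination hφJ
  have hfin := int_arith (p := p) (α := J.re) (β := J.im) (a := ε * a4) (b := ε * b4)
    (by omega) (by rw [mul_pow, mul_pow, hε2]; linarith) hnorm
    (hdvd _ (by push_cast; rw [hb4, hre]; ring))
    (hdvd _ (by push_cast; rw [hb4, hre]; linear_combination (-(J.im : ZMod p) * ε * a4) * hι))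
    (by omega)
    (by rcases hε with h | h <;> rw [h.1] <;> omega)
    (by rcases hε with h | h <;> rw [h.1] <;> omega)
    (by rcases hε with h | h <;> rw [h.1] at ha4 h4 ⊢ <;> omega)
  rw [hJ, GaussianInt.toComplex_def, hfin.1, hfin.2]
  push_cast
  ring
end


section TS
variable {p t : ℕ} [Fact p.Prime] {L : Type*} [Field L] [Fintype L] [Algebra (ZMod p) L]

def SS (L : Type*) [Field L] [Fintype L] [Algebra (ZMod p) L] (χ : MulChar (ZMod p) ℂ) (b : ZMod p) : ℂ :=
  ∑ y : L with Algebra.trace (ZMod p) L y = b, χ (Algebra.norm (ZMod p) y)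

lemma SS_star (χ : MulChar (ZMod p) ℂ) (b : ZMod p) : SS L χ⁻¹ b = star (SS L χ b) := by
  unfold SS
  rw [star_sum]
  exact Finset.sum_congr rfl fun x _ => by rw [MulChar.star_apply']

lemma SS_one (ht : Module.finrank (ZMod p) L = t) {b : ZMod p} (hb : b ≠ 0) :
    SS L 1 b = (p : ℂ) ^ (t - 1) := by
  have ht0 : 0 < t := ht ▸ Module.finrank_pos
  have h1 : SS L 1 b = ((Finset.univ.filter fun y : L => Algebra.trace (ZMod p) L y = b).card : ℂ) := by
    unfold SS
    rw [Finset.card_eq_sum_ones]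
    push_cast
    refine Finset.sum_congr rfl fun y hy => ?_
    have hy := (Finset.mem_filter.1 hy).2
    apply MulChar.one_apply
    rw [isUnit_iff_ne_zero, Ne, Algebra.norm_eq_zero_iff]
    rintro rfl
    exact hb (by rw [← hy, map_zero])
  have hsurj := Algebra.trace_surjective (ZMod p) L
  have hfib : ∀ c : ZMod p, (Finset.univ.filter fun y : L => Algebra.trace (ZMod p) L y = c).card =
      (Finset.univ.filter fun y : L => Algebra.trace (ZMod p) L y = b).card := by
    intro c
    obtain ⟨y0, hy0⟩ := hsurj (b - c)
    refine Finset.card_bij' (fun y _ => y + y0) (fun y _ => y - y0) ?_ ?_ ?_ ?_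
    · intro y hy; simp at hy ⊢; rw [hy, hy0]; ring
    · intro y hy; simp at hy ⊢; rw [hy, hy0]; ring
    · intro y _; simp
    · intro y _; simp
  have htot := Finset.card_eq_sum_card_fiberwise (f := fun y : L => Algebra.trace (ZMod p) L y)
    (s := Finset.univ) (t := Finset.univ) (fun _ _ => by simp)
  rw [Finset.sum_congr rfl fun c _ => hfib c, Finset.sum_const, Finset.card_univ, Finset.card_univ,
    ZMod.card, Module.card_eq_pow_finrank (K := ZMod p), ZMod.card, ht, smul_eq_mul] at htot
  have hp0 : 0 < p := (Fact.out : p.Prime).pos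
  rw [h1, ← Nat.cast_pow]
  congr 1
  apply Nat.eq_of_mul_eq_mul_left hp0
  rw [← htot, ← pow_succ', Nat.sub_add_cancel ht0]

lemma SS_eq (ht : Module.finrank (ZMod p) L = t) {b : ZMod p} (hb : b ≠ 0)
    {χ : MulChar (ZMod p) ℂ} (hχ : χ ≠ 1) {ψ : AddChar (ZMod p) ℂ} (hψ : ψ.IsPrimitive) :
    (p : ℂ) * SS L χ b = (-1) ^ (t - 1) * gaussSum χ ψ ^ t *
      ((χ ^ t) (-b) * gaussSum (χ⁻¹ ^ t) ψ) := by
  have ht0 : 0 < t := ht ▸ Module.finrank_pos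
  have h1 : ∀ c : ZMod p, ∑ y : L, χ (Algebra.norm (ZMod p) y) *
      ψ (c * Algebra.trace (ZMod p) L y) = (-1) ^ (t - 1) * gaussSum χ ψ ^ t * (χ⁻¹ ^ t) c := by
    intro c
    have := hasse_davenport (L := L) χ (ψ.mulShift c) hχ ht
    simp only [AddChar.mulShift_apply] at this
    rw [this, MulChar.pow_apply' _ ht0.ne']
    by_cases hc : c = 0
    · subst hc
      rw [AddChar.mulShift_zero, gaussSum_one_right hχ, MulChar.map_zero, zero_pow ht0.ne']
      ring
    · have := gaussSum_mulShift_eq χ ψ (Units.mk0 c hc)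
      rw [Units.val_mk0] at this
      rw [this]; ring
  have h2 : ∀ y : L, ∑ c : ZMod p, ψ (c * (Algebra.trace (ZMod p) L y - b)) =
      if Algebra.trace (ZMod p) L y = b then (p : ℂ) else 0 := by
    intro y
    have := AddChar.sum_mulShift (Algebra.trace (ZMod p) L y - b) hψ
    rw [this, ZMod.card]
    simp [sub_eq_zero]
  have h3 : gaussSum (χ⁻¹ ^ t) (ψ.mulShift (-b)) = (χ ^ t) (-b) * gaussSum (χ⁻¹ ^ t) ψ := by
    have := gaussSum_mulShift_eq (χ⁻¹ ^ t) ψ (Units.mk0 (-b) (neg_ne_zero.2 hb))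
    rw [Units.val_mk0] at this
    rw [this, inv_pow, inv_inv]
  rw [← h3]
  calc (p : ℂ) * SS L χ b = ∑ y : L, χ (Algebra.norm (ZMod p) y) *
        (if Algebra.trace (ZMod p) L y = b then (p : ℂ) else 0) := by
        unfold SS
        rw [Finset.mul_sum, Finset.sum_filter]
        refine Finset.sum_congr rfl fun y _ => ?_
        split_ifs <;> ring
    _ = ∑ c : ZMod p, ψ (-b * c) * ∑ y : L, χ (Algebra.norm (ZMod p) y) *
          ψ (c * Algebra.trace (ZMod p) L y) := by
        simp_rw [← h2, Finset.mul_sum]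
        rw [Finset.sum_comm]
        refine Finset.sum_congr rfl fun c _ => Finset.sum_congr rfl fun y _ => ?_
        rw [show c * (Algebra.trace (ZMod p) L y - b) = -b * c + c * Algebra.trace (ZMod p) L y by ring,
          AddChar.map_add_eq_mul]
        ring
    _ = _ := by
        simp_rw [h1]
        unfold gaussSum
        rw [Finset.mul_sum]
        refine Finset.sum_congr rfl fun c _ => ?_
        rw [AddChar.mulShift_apply]; ring

end TS

section VAL
variable {p t f : ℕ} [Fact p.Prime] {L : Type*} [Field L] [Fintype L] [Algebra (ZMod p) L]

lemma SS_rho (hp : p = 4 * f + 1) (ht : Module.finrank (ZMod p) L = t) {b : ZMod p} (hb : b ≠ 0)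
    {ρ : MulChar (ZMod p) ℂ} (hρ : ρ ≠ 1) (hρ2 : ρ ^ 2 = 1) (hρ1 : ρ (-1) = 1) :
    (t % 2 = 1 → SS L ρ b = (p : ℂ) ^ ((t - 1) / 2) * ρ b) ∧
    (t % 2 = 0 → SS L ρ b = (p : ℂ) ^ ((t - 2) / 2)) := by
  have ht0 : 0 < t := ht ▸ Module.finrank_pos
  have hψ := ZMod.isPrimitive_stdAddChar p
  have h := SS_eq (L := L) ht hb hρ hψ
  have hp0 : (p : ℂ) ≠ 0 := by exact_mod_cast (Fact.out : p.Prime).ne_zero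
  have hsq : gaussSum ρ (ZMod.stdAddChar (N := p)) ^ 2 = p := by
    rw [gaussSum_sq hρ ((MulChar.isQuadratic_iff_sq_eq_one).2 hρ2) hψ, hρ1, ZMod.card, one_mul]
  have hinv : ρ⁻¹ = ρ := by rw [inv_eq_iff_mul_eq_one, ← sq, hρ2]
  have hneg : ρ (-b) = ρ b := by rw [← neg_one_mul, map_mul, hρ1, one_mul]
  rw [hinv] at h
  constructor
  · intro h2
    obtain ⟨k, rfl⟩ : ∃ k, t = 2 * k + 1 := ⟨t / 2, by omega⟩
    have hρt : ρ ^ (2 * k + 1) = ρ := by rw [pow_succ, pow_mul, hρ2, one_pow, one_mul]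
    rw [hρt, hneg, Nat.add_sub_cancel, pow_succ, pow_mul, pow_mul, hsq, neg_one_sq, one_pow] at h
    rw [show (2 * k + 1 - 1) / 2 = k by omega]
    apply mul_left_cancel₀ hp0
    rw [h]
    linear_combination (p : ℂ) ^ k * ρ b * hsq
  · intro h2
    obtain ⟨k, rfl⟩ : ∃ k, t = 2 * (k + 1) := ⟨t / 2 - 1, by omega⟩
    have hρt : ρ ^ (2 * (k + 1)) = 1 := by rw [pow_mul, hρ2, one_pow]
    have hψ1 : ZMod.stdAddChar (N := p) ≠ 1 := by
      intro h'
      rw [h', gaussSum_one_right hρ] at hsq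
      apply hp0; rw [← hsq]; norm_num
    rw [hρt, gaussSum_one_left hψ1, MulChar.one_apply (isUnit_iff_ne_zero.2 (neg_ne_zero.2 hb)),
      pow_mul, hsq, show 2 * (k + 1) - 1 = 2 * k + 1 by omega, pow_succ, pow_mul, neg_one_sq,
      one_pow] at h
    rw [show (2 * (k + 1) - 2) / 2 = k by omega]
    apply mul_left_cancel₀ hp0
    rw [h]; ring

lemma SS_chi (hp : p = 4 * f + 1) (ht : Module.finrank (ZMod p) L = t) {b : ZMod p} (hb : b ≠ 0)
    {χ : MulChar (ZMod p) ℂ} (hχ4 : χ ^ 4 = 1) (hχ2 : χ ^ 2 ≠ 1) (hχ1 : χ (-1) = (-1) ^ f) {π4 : ℂ}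
    (hJ : jacobiSum χ χ = π4) :
    (t % 4 = 1 → SS L χ b = (p : ℂ) ^ ((t - 1) / 4) * π4 ^ ((t - 1) / 2) * χ b) ∧
    (t % 4 = 3 → SS L χ b = (-1) ^ f * (p : ℂ) ^ ((t - 3) / 4) * π4 ^ ((t + 1) / 2) * χ⁻¹ b) ∧
    (t % 4 = 2 → SS L χ b = - ((p : ℂ) ^ ((t - 2) / 4) * π4 ^ (t / 2) * (χ ^ 2) b)) ∧
    (t % 4 = 0 → SS L χ b = (p : ℂ) ^ ((t - 4) / 4) * π4 ^ (t / 2)) := by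
  have ht0 : 0 < t := ht ▸ Module.finrank_pos
  have hχ : χ ≠ 1 := by rintro rfl; simp at hχ2
  have hε : ((-1 : ℂ) ^ f) ^ 2 = 1 := by rw [← pow_mul, mul_comm, pow_mul, neg_one_sq, one_pow]
  have hψ := ZMod.isPrimitive_stdAddChar p
  have h := SS_eq (L := L) ht hb hχ hψ
  have hp0 : (p : ℂ) ≠ 0 := by exact_mod_cast (Fact.out : p.Prime).ne_zero
  have hρ1 : (χ ^ 2) (-1) = 1 := by rw [MulChar.pow_apply' _ two_ne_zero, hχ1, hε]
  have hρ2 : (χ ^ 2) ^ 2 = 1 := by rw [← pow_mul, hχ4]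
  have hsq : gaussSum (χ ^ 2) (ZMod.stdAddChar (N := p)) ^ 2 = p := by
    rw [gaussSum_sq hχ2 ((MulChar.isQuadratic_iff_sq_eq_one).2 hρ2) hψ, hρ1, ZMod.card, one_mul]
  have hψ1 : ZMod.stdAddChar (N := p) ≠ 1 := by
    intro h'
    rw [h', gaussSum_one_right hχ2] at hsq
    apply hp0; rw [← hsq]; norm_num
  have hG2 : gaussSum χ (ZMod.stdAddChar (N := p)) ^ 2 =
      π4 * gaussSum (χ ^ 2) (ZMod.stdAddChar (N := p)) := by
    have := jacobiSum_mul_nontrivial (χ := χ) (φ := χ) (by rwa [← sq]) (ZMod.stdAddChar (N := p))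
    rw [hJ, ← sq, ← sq] at this
    rw [← this]; ring
  have hGG : gaussSum χ (ZMod.stdAddChar (N := p)) * gaussSum χ⁻¹ (ZMod.stdAddChar (N := p)) =
      (-1) ^ f * p := by
    have h1 := gaussSum_mul_gaussSum_eq_card hχ hψ
    have h2 := mul_gaussSum_inv_eq_gaussSum χ⁻¹ (ZMod.stdAddChar (N := p))
    have h3 : χ⁻¹ (-1) = (-1) ^ f := by rw [MulChar.inv_apply', inv_neg_one, hχ1]
    rw [h3] at h2
    rw [ZMod.card] at h1
    rw [← h2]
    linear_combination (-1 : ℂ) ^ f * h1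
  have hneg : χ (-b) = (-1) ^ f * χ b := by rw [← neg_one_mul, map_mul, hχ1]
  have hnegi : χ⁻¹ (-b) = (-1) ^ f * χ⁻¹ b := by
    rw [← neg_one_mul, map_mul, MulChar.inv_apply' χ (-1), inv_neg_one, hχ1]
  have hneg2 : (χ ^ 2) (-b) = (χ ^ 2) b := by rw [← neg_one_mul, map_mul, hρ1, one_mul]
  have hinv4 : χ⁻¹ ^ 4 = 1 := by rw [inv_pow, hχ4, inv_one]
  have hinv2 : χ⁻¹ ^ 2 = χ ^ 2 := by rw [inv_pow, inv_eq_iff_mul_eq_one, ← sq, hρ2]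
  have hinv3 : χ ^ 3 = χ⁻¹ := by rw [eq_inv_iff_mul_eq_one, ← pow_succ, hχ4]
  have hinv3' : χ⁻¹ ^ 3 = χ := by rw [inv_pow, hinv3, inv_inv]
  generalize hGd : gaussSum χ (ZMod.stdAddChar (N := p)) = G at *
  have hmod : ∀ (k j : ℕ), χ ^ (4 * k + j) = χ ^ j := by
    intro k j; rw [pow_add, pow_mul, hχ4, one_pow, one_mul]
  have hmod' : ∀ (k j : ℕ), χ⁻¹ ^ (4 * k + j) = χ⁻¹ ^ j := by
    intro k j; rw [pow_add, pow_mul, hinv4, one_pow, one_mul]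
  have hG4 : G ^ 4 = π4 ^ 2 * p := by
    rw [show G ^ 4 = (G ^ 2) ^ 2 by ring, hG2, mul_pow, hsq]
  have hGk : ∀ k j : ℕ, G ^ (4 * k + j) = π4 ^ (2 * k) * p ^ k * G ^ j := by
    intro k j; rw [pow_add, pow_mul, hG4, mul_pow, ← pow_mul]
  have hs : ∀ k : ℕ, (-1 : ℂ) ^ (2 * k) = 1 := fun k => by rw [pow_mul, neg_one_sq, one_pow]
  refine ⟨fun h4 => ?_, fun h4 => ?_, fun h4 => ?_, fun h4 => ?_⟩
  · obtain ⟨k, rfl⟩ : ∃ k, t = 4 * k + 1 := ⟨t / 4, by omega⟩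
    rw [hmod, hmod', hGk, show 4 * k + 1 - 1 = 2 * (2 * k) by omega, hs, pow_one, pow_one, pow_one,
      hneg] at h
    rw [show (4 * k + 1 - 1) / 4 = k by omega, show (4 * k + 1 - 1) / 2 = 2 * k by omega]
    apply mul_left_cancel₀ hp0
    rw [h]
    linear_combination (π4 ^ (2 * k) * (p : ℂ) ^ k * (-1) ^ f * χ b) * hGG +
      (π4 ^ (2 * k) * (p : ℂ) ^ k * p * χ b) * hε
  · obtain ⟨k, rfl⟩ : ∃ k, t = 4 * k + 3 := ⟨t / 4, by omega⟩
    rw [hmod, hmod', hGk, show 4 * k + 3 - 1 = 2 * (2 * k + 1) by omega, hs, hinv3, hinv3',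
      hnegi] at h
    rw [show (4 * k + 3 - 3) / 4 = k by omega, show (4 * k + 3 + 1) / 2 = 2 * k + 2 by omega]
    apply mul_left_cancel₀ hp0
    rw [h]
    rw [hGd]
    linear_combination (π4 ^ (2 * k) * (p : ℂ) ^ k * (-1) ^ f * χ⁻¹ b) * hG4
  · obtain ⟨k, rfl⟩ : ∃ k, t = 4 * k + 2 := ⟨t / 4, by omega⟩
    rw [hmod, hmod', hGk, show 4 * k + 2 - 1 = 2 * (2 * k) + 1 by omega, pow_succ, hs, hinv2,
      hneg2, hG2] at h
    rw [show (4 * k + 2 - 2) / 4 = k by omega, show (4 * k + 2) / 2 = 2 * k + 1 by omega]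
    apply mul_left_cancel₀ hp0
    rw [h]
    linear_combination (-(π4 ^ (2 * k + 1) * (p : ℂ) ^ k * (χ ^ 2) b)) * hsq
  · obtain ⟨k, rfl⟩ : ∃ k, t = 4 * (k + 1) := ⟨t / 4 - 1, by omega⟩
    rw [← add_zero (4 * (k + 1)), hmod, hmod', hGk, pow_zero, pow_zero, pow_zero, gaussSum_one_left hψ1,
      MulChar.one_apply (isUnit_iff_ne_zero.2 (neg_ne_zero.2 hb)),
      show 4 * (k + 1) + 0 - 1 = 2 * (2 * k + 1) + 1 by omega, pow_succ, hs] at h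
    rw [show (4 * (k + 1) - 4) / 4 = k by omega, show 4 * (k + 1) / 2 = 2 * (k + 1) by omega]
    apply mul_left_cancel₀ hp0
    rw [h]; ring
end VAL

section TR
theorem NN_transfer {p m t h : ℕ} [Fact p.Prime] (hm : 0 < m) (ht : t ∣ m)
    (K : Type*) [Field K] [Fintype K] [Algebra (ZMod p) K] (hK : Fintype.card K = p ^ m)
    (L : Type) [Field L] [Fintype L] [Algebra (ZMod p) L] (hL : Module.finrank (ZMod p) L = t)
    (g : ZMod p) (a b : ZMod p) (hpmt : ¬ p ∣ m / t) (hb : b = a * ((m / t : ℕ) : ZMod p)⁻¹) :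
    (NN (ZMod p) K g 4 h t a : ℂ) =
      ∑ y : L with Algebra.trace (ZMod p) L y = b,
        if (∃ k : ℕ, (Algebra.norm (ZMod p) y) ^ (m / t) = g ^ (h + 4 * k)) then (1 : ℂ) else 0 := by
  have hp1 : 1 < p := (Fact.out : p.Prime).one_lt
  have hKf : Module.finrank (ZMod p) K = m := by
    have := FiniteField.pow_finrank_eq_card p K
    rw [hK] at this
    exact Nat.pow_right_injective hp1 this
  obtain ⟨ι⟩ := FiniteField.nonempty_algHom_of_finrank_dvd (F := ZMod p) (K := L) (L := K)
    (by rw [hL, hKf]; exact ht)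
  let _ : Algebra L K := ι.toRingHom.toAlgebra
  have : IsScalarTower (ZMod p) L K := IsScalarTower.of_algebraMap_eq' (by
    ext x; exact (ι.commutes x).symm)
  have ht0 : 0 < t := Nat.pos_of_dvd_of_pos ht hm
  have hLK : Module.finrank L K = m / t := by
    have := Module.finrank_mul_finrank (ZMod p) L K
    rw [hL, hKf] at this
    rw [← this, Nat.mul_div_cancel_left _ ht0]
  have htr : ∀ y : L, Algebra.trace (ZMod p) K (ι y) = ((m / t : ℕ) : ZMod p) * Algebra.trace (ZMod p) L y := by
    intro y
    have := Algebra.trace_trace (R := ZMod p) (S := L) (algebraMap L K y)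
    rw [Algebra.trace_algebraMap, hLK, map_nsmul, nsmul_eq_mul] at this
    exact this.symm
  have hno : ∀ y : L, Algebra.norm (ZMod p) (ι y) = (Algebra.norm (ZMod p) y) ^ (m / t) := by
    intro y
    have := Algebra.norm_norm (R := ZMod p) (S := L) (a := algebraMap L K y)
    rw [Algebra.norm_algebraMap, hLK, map_pow] at this
    exact this.symm
  have hcL : Fintype.card L = p ^ t := by
    rw [← FiniteField.pow_finrank_eq_card p L, hL]
  have hpt : 1 < p ^ t := Nat.one_lt_pow ht0.ne' hp1
  have hfix : ∀ x : K, x ^ p ^ t = x ↔ ∃ y, ι y = x := by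
    have hsub : Finset.univ.image ι ⊆ (X ^ (p ^ t) - X : K[X]).roots.toFinset := by
      intro x hx
      obtain ⟨y, -, rfl⟩ := Finset.mem_image.1 hx
      rw [Multiset.mem_toFinset, mem_roots (FiniteField.X_pow_card_sub_X_ne_zero K hpt)]
      simp only [IsRoot.def, eval_sub, eval_pow, eval_X]
      rw [← map_pow, ← hcL, FiniteField.pow_card, sub_self]
    have heq := Finset.eq_of_subset_of_card_le hsub (by
      rw [Finset.card_image_of_injective _ (show Function.Injective (fun y => ι y) from ι.injective), Finset.card_univ, hcL]
      refine (Multiset.toFinset_card_le _).trans ((card_roots' _).trans ?_)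
      rw [FiniteField.X_pow_card_sub_X_natDegree_eq K hpt])
    intro x
    have h1 : x ∈ Finset.univ.image ι ↔ x ∈ (X ^ (p ^ t) - X : K[X]).roots.toFinset := by rw [heq]
    rw [Multiset.mem_toFinset, mem_roots (FiniteField.X_pow_card_sub_X_ne_zero K hpt)] at h1
    simp only [IsRoot.def, eval_sub, eval_pow, eval_X, sub_eq_zero, Finset.mem_image, Finset.mem_univ, true_and] at h1
    exact h1.symm
  have hn0 : ((m / t : ℕ) : ZMod p) ≠ 0 := by
    rwa [Ne, ZMod.natCast_eq_zero_iff]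
  rw [Finset.sum_ite, Finset.sum_const_zero, add_zero, Finset.sum_const, nsmul_one, Finset.filter_filter]
  congr 1
  rw [NN, ZMod.card, ← Fintype.card_subtype, ← Nat.card_eq_fintype_card]
  symm
  refine Nat.card_congr (Equiv.ofBijective (fun y => ⟨ι y.1, (hfix _).2 ⟨_, rfl⟩, ?_, ?_⟩) ⟨?_, ?_⟩)
  · rw [htr, y.2.1, hb]; field_simp
  · rw [hno]; exact y.2.2
  · intro x y hxy
    exact Subtype.ext (ι.injective (congrArg Subtype.val hxy))
  · rintro ⟨x, hx1, hx2, hx3⟩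
    obtain ⟨y, rfl⟩ := (hfix x).1 hx1
    refine ⟨⟨y, ?_, ?_⟩, rfl⟩
    · rw [htr] at hx2
      rw [hb, ← hx2]; field_simp
    · rwa [hno] at hx3
end TR

section IND
variable {p f : ℕ} [Fact p.Prime]

theorem ind_iff {h n n' d e i0 : ℕ} (hp : p = 4 * f + 1) (g : (ZMod p)ˣ)
    (hg : ∀ u : (ZMod p)ˣ, u ∈ Subgroup.zpowers g) (ho : orderOf g = 4 * f)
    (hn : 0 < n) (hde : 4 = d * e) (hn' : n = d * n') (hdh : d ∣ h)
    (hcop : Nat.Coprime n' e) (hi : i0 < e) (hi0 : n' * i0 ≡ h / d [MOD e]) (z : ZMod p) :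
    (∃ k : ℕ, z ^ n = (g : ZMod p) ^ (h + 4 * k)) ↔ ∃ k : ℕ, z = (g : ZMod p) ^ k ∧ k % e = i0 := by
  have hd0 : 0 < d := Nat.pos_of_ne_zero (by rintro rfl; omega)
  have hf : 0 < f := by 
    rcases Nat.eq_zero_or_pos f with rfl | h
    · exact absurd hp (Fact.out : p.Prime).one_lt.ne'
    · exact h
  obtain ⟨h', rfl⟩ := hdh
  rw [Nat.mul_div_cancel_left _ hd0] at hi0
  constructor
  · rintro ⟨k, hk⟩
    have hz : z ≠ 0 := by
      rintro rfl
      rw [zero_pow hn.ne'] at hk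
      exact pow_ne_zero _ g.ne_zero hk.symm
    obtain ⟨j, hj⟩ := (mem_powers_iff_mem_zpowers.2 (hg (Units.mk0 z hz)))
    have hj' : z = (g : ZMod p) ^ j := by
      have := congrArg Units.val hj
      simpa using this.symm
    refine ⟨j, hj', ?_⟩
    rw [hj', ← pow_mul] at hk
    have hk' : g ^ (j * n) = g ^ (d * h' + 4 * k) := by
      ext; push_cast; exact hk
    rw [pow_eq_pow_iff_modEq, ho] at hk'
    have h4 : j * n ≡ d * h' + 4 * k [MOD 4] := hk'.of_mul_right f
    have h5 : d * (n' * j) ≡ d * h' [MOD d * e] := by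
      rw [← hde]
      calc d * (n' * j) = j * n := by rw [hn']; ring
        _ ≡ d * h' + 4 * k [MOD 4] := h4
        _ ≡ d * h' [MOD 4] := by simp [Nat.ModEq]
    have h6 : n' * j ≡ h' [MOD e] := Nat.ModEq.mul_left_cancel' hd0.ne' h5
    have h7 : j ≡ i0 [MOD e] := Nat.ModEq.cancel_left_of_coprime hcop.symm (h6.trans hi0.symm)
    rw [h7, Nat.mod_eq_of_lt hi]
  · rintro ⟨j, rfl, hj⟩
    have h7 : j ≡ i0 [MOD e] := by rw [Nat.ModEq, hj, Nat.mod_eq_of_lt hi]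
    have h6 : n' * j ≡ h' [MOD e] := (h7.mul_left n').trans hi0
    have h5 : j * n ≡ d * h' [MOD 4] := by
      have := h6.mul_left' d
      rw [← hde] at this
      rwa [hn', show j * (d * n') = d * (n' * j) by ring]
    -- choose k with d*h' + 4*k ≡ j*n mod 4 f
    have : d * h' ≤ j * n + 4 * f * (d * h') :=
      (Nat.le_mul_of_pos_left _ (by omega)).trans (Nat.le_add_left _ _)
    obtain ⟨k, hk⟩ := (Nat.modEq_iff_dvd' this).1 (h5.symm.trans (by
      simp [Nat.ModEq, mul_assoc]))
    refine ⟨k, ?_⟩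
    rw [← hk, Nat.add_sub_cancel' this, ← pow_mul, pow_add, pow_mul _ (4 * f)]
    have : (g : ZMod p) ^ (4 * f) = 1 := by
      rw [← ho, ← Units.val_pow_eq_pow_val, pow_orderOf_eq_one, Units.val_one]
    rw [this, one_pow, mul_one]

theorem ind_ex (hp : p = 4 * f + 1) (g : (ZMod p)ˣ)
    (hg : ∀ u : (ZMod p)ˣ, u ∈ Subgroup.zpowers g) (ho : orderOf g = 4 * f) (e i0 j : ℕ) (he : e ∣ 4) :
    (∃ k : ℕ, (g : ZMod p) ^ j = (g : ZMod p) ^ k ∧ k % e = i0) ↔ j % e = i0 := by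
  constructor
  · rintro ⟨k, hk, hke⟩
    have hk' : g ^ j = g ^ k := by
      ext; push_cast; exact hk
    rw [pow_eq_pow_iff_modEq, ho] at hk'
    have : j ≡ k [MOD e] := hk'.of_dvd (he.trans (Dvd.intro _ rfl))
    rw [this, hke]
  · intro h
    exact ⟨j, rfl, h⟩

theorem ind_zero (g : (ZMod p)ˣ) (e i0 : ℕ) :
    ¬ (∃ k : ℕ, (0 : ZMod p) = (g : ZMod p) ^ k ∧ k % e = i0) := by
  rintro ⟨k, hk, -⟩
  exact pow_ne_zero _ g.ne_zero hk.symm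

theorem ex_pow (g : (ZMod p)ˣ)
    (hg : ∀ u : (ZMod p)ˣ, u ∈ Subgroup.zpowers g) (z : ZMod p) (hz : z ≠ 0) :
    ∃ j : ℕ, z = (g : ZMod p) ^ j := by
  obtain ⟨j, hj⟩ := (mem_powers_iff_mem_zpowers.2 (hg (Units.mk0 z hz)))
  refine ⟨j, ?_⟩
  have := congrArg Units.val hj
  simpa using this.symm

theorem ind1 (hp : p = 4 * f + 1) (g : (ZMod p)ˣ)
    (hg : ∀ u : (ZMod p)ˣ, u ∈ Subgroup.zpowers g) (ho : orderOf g = 4 * f)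
    (χ : MulChar (ZMod p) ℂ) (hχ : χ (g : ZMod p) = Complex.I) (i0 : ℕ) (hi : i0 < 4) (z : ZMod p) :
    (if (∃ k : ℕ, z = (g : ZMod p) ^ k ∧ k % 4 = i0) then (1 : ℂ) else 0) =
      1 / 4 * ((1 : MulChar (ZMod p) ℂ) z + (-1) ^ i0 * ((χ ^ 2) z +
        (Complex.I ^ i0 * χ z + star (Complex.I ^ i0 * χ z)))) := by
  by_cases hz : z = 0
  · subst hz
    rw [if_neg (ind_zero g 4 i0)]
    simp [MulChar.map_zero]
  · obtain ⟨j, rfl⟩ := ex_pow g hg z hz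
    rw [MulChar.one_apply (isUnit_iff_ne_zero.2 hz)]
    simp only [ind_ex hp g hg ho 4 i0 j dvd_rfl]
    rw [MulChar.pow_apply' _ two_ne_zero, map_pow, hχ]
    have hI : Complex.I ^ j = Complex.I ^ (j % 4) := by
      conv_lhs => rw [← Nat.div_add_mod j 4, pow_add, pow_mul, Complex.I_pow_four, one_pow, one_mul]
    rw [hI]
    have h4 : j % 4 < 4 := Nat.mod_lt _ (by norm_num)
    generalize j % 4 = r at *
    interval_cases i0 <;> interval_cases r <;> norm_num [pow_succ, Complex.ext_iff]

theorem ind2 (hp : p = 4 * f + 1) (g : (ZMod p)ˣ)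
    (hg : ∀ u : (ZMod p)ˣ, u ∈ Subgroup.zpowers g) (ho : orderOf g = 4 * f)
    (χ : MulChar (ZMod p) ℂ) (hχ : χ (g : ZMod p) = Complex.I) (i0 : ℕ) (hi : i0 < 2) (z : ZMod p) :
    (if (∃ k : ℕ, z = (g : ZMod p) ^ k ∧ k % 2 = i0) then (1 : ℂ) else 0) =
      1 / 2 * ((1 : MulChar (ZMod p) ℂ) z + (-1) ^ i0 * (χ ^ 2) z) := by
  by_cases hz : z = 0
  · subst hz
    rw [if_neg (ind_zero g 2 i0)]
    simp [MulChar.map_zero]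
  · obtain ⟨j, rfl⟩ := ex_pow g hg z hz
    rw [MulChar.one_apply (isUnit_iff_ne_zero.2 hz)]
    simp only [ind_ex hp g hg ho 2 i0 j (by norm_num)]
    rw [MulChar.pow_apply' _ two_ne_zero, map_pow, hχ, ← pow_mul, mul_comm j, pow_mul, Complex.I_sq]
    have hI : (-1 : ℂ) ^ j = (-1) ^ (j % 2) := by
      conv_lhs => rw [← Nat.div_add_mod j 2, pow_add, pow_mul, neg_one_sq, one_pow, one_mul]
    rw [hI]
    have h4 : j % 2 < 2 := Nat.mod_lt _ (by norm_num)
    generalize j % 2 = r at *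
    interval_cases i0 <;> interval_cases r <;> norm_num

theorem ind4 (hp : p = 4 * f + 1) (g : (ZMod p)ˣ)
    (hg : ∀ u : (ZMod p)ˣ, u ∈ Subgroup.zpowers g) (ho : orderOf g = 4 * f)
    (i0 : ℕ) (hi : i0 < 1) (z : ZMod p) :
    (if (∃ k : ℕ, z = (g : ZMod p) ^ k ∧ k % 1 = i0) then (1 : ℂ) else 0) =
      (1 : MulChar (ZMod p) ℂ) z := by
  by_cases hz : z = 0
  · subst hz
    rw [if_neg (ind_zero g 1 i0)]
    simp [MulChar.map_zero]
  · obtain ⟨j, rfl⟩ := ex_pow g hg z hz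
    rw [MulChar.one_apply (isUnit_iff_ne_zero.2 hz)]
    rw [if_pos ⟨j, rfl, by omega⟩]
end IND

/-- The values of `N_t` for `s = 4`, `q = p ≡ 1 (mod 4)` and `a ≠ 0`, assuming
`p ∤ m/t` and `d ∣ h`, in terms of `π_4 = (−1)^f·(a_4 + i·b_4)`, the quadratic
character `ρ` of `F_p`, the quartic character `χ_4`, and `Q_{t,4}`. -/
theorem stmt12 (p m h t d l i0 f : ℕ) [Fact p.Prime] (hm : 2 ≤ m)
    (ht : t ∣ m) (ht0 : 0 < t)
    (K : Type*) [Field K] [Fintype K] [Algebra (ZMod p) K]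
    (hK : Fintype.card K = p ^ m)
    (hp : p = 4 * f + 1)
    (g : (ZMod p)ˣ) (hg : ∀ u : (ZMod p)ˣ, u ∈ Subgroup.zpowers g)
    (hh : h < 4)
    (χ4 : MulChar (ZMod p) ℂ) (hχ4o : orderOf χ4 = 4) (hχ4g : χ4 (g : ZMod p) = Complex.I)
    (a4 b4 : ℤ) (hab : a4 ^ 2 + b4 ^ 2 = (p : ℤ))
    (ha4 : a4 ≡ -legendreSym p 2 [ZMOD 4])
    (hb4 : (b4 : ZMod p) = (a4 : ZMod p) * (g : ZMod p) ^ ((p - 1) / 4))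
    (π4 : ℂ) (hπ4 : π4 = (-1 : ℂ) ^ f * ((a4 : ℂ) + Complex.I * (b4 : ℂ)))
    (hd : d = Nat.gcd (m / t) 4) (hl : l = Nat.gcd t (4 / d))
    (hpmt : ¬ p ∣ m / t) (hdh : d ∣ h)
    (hi0 : i0 < 4 / d ∧ (m / (d * t)) * i0 ≡ h / d [MOD 4 / d])
    (a : ZMod p) (ha : a ≠ 0)
    (a0 : ZMod p) (ha0 : a0 = -(((m / t : ℕ) : ZMod p)) * a⁻¹) :
    (d = 1 ∧ l = 1 ∧ t % 4 = 1 →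
      (NN (ZMod p) K (g : ZMod p) 4 h t a : ℂ) =
        (1 / 4) * ((p : ℂ) ^ (t - 1) +
          (-1 : ℂ) ^ i0 * ((p : ℂ) ^ ((t - 1) / 2) * (quadraticChar (ZMod p) a0 : ℂ) +
            2 * (((p : ℂ) ^ ((t - 1) / 4) * π4 ^ ((t - 1) / 2) * χ4⁻¹ (-a0) *
              Complex.I ^ i0).re : ℂ)))) ∧
    (d = 1 ∧ l = 1 ∧ t % 4 = 3 →
      (NN (ZMod p) K (g : ZMod p) 4 h t a : ℂ) =
        (1 / 4) * ((p : ℂ) ^ (t - 1) +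
          (-1 : ℂ) ^ i0 * ((p : ℂ) ^ ((t - 1) / 2) * (quadraticChar (ZMod p) a0 : ℂ) +
            2 * (((-1 : ℂ) ^ f * (p : ℂ) ^ ((t - 3) / 4) * π4 ^ ((t + 1) / 2) * χ4 (-a0) *
              Complex.I ^ i0).re : ℂ)))) ∧
    (d = 1 ∧ l = 2 →
      (NN (ZMod p) K (g : ZMod p) 4 h t a : ℂ) =
        (1 / 4) * ((p : ℂ) ^ (t - 1) +
          (-1 : ℂ) ^ i0 * (p : ℂ) ^ ((t - 2) / 4) * ((p : ℂ) ^ ((t - 2) / 4) -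
            2 * (quadraticChar (ZMod p) a0 : ℂ) *
              ((π4 ^ (t / 2) * Complex.I ^ i0).re : ℂ)))) ∧
    (d = 1 ∧ l = 4 →
      (NN (ZMod p) K (g : ZMod p) 4 h t a : ℂ) =
        (1 / 4) * ((p : ℂ) ^ (t - 1) +
          (-1 : ℂ) ^ i0 * (p : ℂ) ^ ((t - 4) / 4) * ((p : ℂ) ^ (t / 4) +
            2 * ((π4 ^ (t / 2) * Complex.I ^ i0).re : ℂ)))) ∧
    (d = 2 ∧ l = 1 →
      (NN (ZMod p) K (g : ZMod p) 4 h t a : ℂ) =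
        (1 / 2) * ((p : ℂ) ^ (t - 1) +
          (-1 : ℂ) ^ i0 * (p : ℂ) ^ ((t - 1) / 2) * (quadraticChar (ZMod p) a0 : ℂ))) ∧
    (d = 2 ∧ l = 2 →
      (NN (ZMod p) K (g : ZMod p) 4 h t a : ℂ) =
        (1 / 2) * ((p : ℂ) ^ (t - 1) + (-1 : ℂ) ^ i0 * (p : ℂ) ^ ((t - 2) / 2))) ∧
    (d = 4 ∧ l = 1 →
      (NN (ZMod p) K (g : ZMod p) 4 h t a : ℂ) = (p : ℂ) ^ (t - 1)) := by
  have hp1 : 1 < p := (Fact.out : p.Prime).one_lt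
  have hn0 : ((m / t : ℕ) : ZMod p) ≠ 0 := by rwa [Ne, ZMod.natCast_eq_zero_iff]
  have hmt : 0 < m / t := Nat.div_pos (Nat.le_of_dvd (by omega) ht) ht0
  have ho := order_g hp g hg
  obtain ⟨b, hb⟩ : ∃ b : ZMod p, b = a * ((m / t : ℕ) : ZMod p)⁻¹ := ⟨_, rfl⟩
  have hb0 : b ≠ 0 := by rw [hb]; exact mul_ne_zero ha (inv_ne_zero hn0)
  have hna0 : -a0 = b⁻¹ := by rw [ha0, hb, mul_inv, inv_inv]; ring
  let _ : Fintype (GaloisField p t) := Fintype.ofFinite _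
  have hL : Module.finrank (ZMod p) (GaloisField p t) = t := GaloisField.finrank p ht0.ne'
  have hχ4 : χ4 ^ 4 = 1 := by rw [← hχ4o, pow_orderOf_eq_one]
  have hχ2 : χ4 ^ 2 ≠ 1 := pow_ne_one_of_lt_orderOf two_ne_zero (by omega)
  have hχ1 : χ4 (-1) = (-1) ^ f := by
    rw [← g2f hp g hg, map_pow, hχ4g, pow_mul, Complex.I_sq]
  have hρ2 : (χ4 ^ 2) ^ 2 = 1 := by rw [← pow_mul, hχ4]
  have hρ1 : (χ4 ^ 2) (-1) = 1 := by
    rw [MulChar.pow_apply' _ two_ne_zero, hχ1, ← pow_mul, mul_comm, pow_mul, neg_one_sq, one_pow]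
  have hsq := sq_char hp g hg χ4 (by rw [hχ4g, Complex.I_sq])
  have hJ : jacobiSum χ4 χ4 = π4 := by
    rw [hπ4]; exact jac_val hp g hg χ4 hχ4g a4 b4 hab ha4 hb4
  have hρb : (χ4 ^ 2) b = (quadraticChar (ZMod p) a0 : ℂ) := by
    have h1 : (quadraticChar (ZMod p) a0 : ℂ) = (χ4 ^ 2) a0 := by
      rw [hsq, MulChar.ringHomComp_apply]; rfl
    have h2 : a0 = -1 * b⁻¹ := by rw [← hna0]; ring
    rw [h1, h2, map_mul, hρ1, one_mul, ← MulChar.inv_apply', inv_eq_of_mul_eq_one_right (a := χ4 ^ 2)]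
    rw [← sq, hρ2]
  have hc1 : χ4⁻¹ (-a0) = χ4 b := by rw [hna0, MulChar.inv_apply', inv_inv]
  have hc2 : χ4 (-a0) = χ4⁻¹ b := by rw [hna0, MulChar.inv_apply']
  obtain ⟨r1, r0⟩ := SS_rho (L := GaloisField p t) hp hL hb0 hχ2 hρ2 hρ1
  obtain ⟨c1, c3, c2, c0⟩ := SS_chi (L := GaloisField p t) hp hL hb0 hχ4 hχ2 hχ1 hJ
  have s1 := SS_one (L := GaloisField p t) hL hb0
  have re2 : ∀ w : ℂ, (2 : ℂ) * (w.re : ℂ) = w + star w := by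
    intro w
    rw [Complex.star_def, Complex.add_conj]; push_cast; ring
  have hN := NN_transfer (h := h) (by omega) ht K hK (GaloisField p t) hL (g : ZMod p) a b hpmt hb
  have hd4 : d ∣ 4 := hd ▸ Nat.gcd_dvd_right _ _
  have hdn : d ∣ m / t := hd ▸ Nat.gcd_dvd_left _ _
  have hdpos : 0 < d := Nat.pos_of_dvd_of_pos hd4 (by norm_num)
  have hcop : Nat.Coprime (m / t / d) (4 / d) := by
    rw [hd]; exact Nat.coprime_div_gcd_div_gcd (hd ▸ hdpos)
  have hdt : m / (d * t) = m / t / d := by rw [mul_comm, Nat.div_div_eq_div_mul]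
  rw [hdt] at hi0
  have hind := fun z => ind_iff (h := h) (n := m / t) (n' := m / t / d) (d := d) (e := 4 / d) (i0 := i0)
    hp g hg ho hmt (Nat.mul_div_cancel' hd4).symm (Nat.mul_div_cancel' hdn).symm hdh hcop hi0.1 hi0.2 z
  simp only [hind] at hN
  have hi := hi0.1
  have D1 : d = 1 → (NN (ZMod p) K (g : ZMod p) 4 h t a : ℂ) =
      1 / 4 * ((p : ℂ) ^ (t - 1) + (-1) ^ i0 * (SS (GaloisField p t) (χ4 ^ 2) b +
        (Complex.I ^ i0 * SS (GaloisField p t) χ4 b +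
          star (Complex.I ^ i0 * SS (GaloisField p t) χ4 b)))) := by
    rintro hd1
    rw [hd1, Nat.div_one] at hN hi
    rw [hN, ← s1]
    simp only [ind1 hp g hg ho χ4 hχ4g i0 hi, SS]
    rw [← Finset.mul_sum, Finset.sum_add_distrib, ← Finset.mul_sum, Finset.sum_add_distrib,
      Finset.sum_add_distrib, ← star_sum, ← Finset.mul_sum]
  have D2 : d = 2 → (NN (ZMod p) K (g : ZMod p) 4 h t a : ℂ) =
      1 / 2 * ((p : ℂ) ^ (t - 1) + (-1) ^ i0 * SS (GaloisField p t) (χ4 ^ 2) b) := by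
    rintro hd1
    rw [hd1, show 4 / 2 = 2 from rfl] at hN hi
    rw [hN, ← s1]
    simp only [ind2 hp g hg ho χ4 hχ4g i0 hi, SS]
    rw [← Finset.mul_sum, Finset.sum_add_distrib, ← Finset.mul_sum]
  have D4 : d = 4 → (NN (ZMod p) K (g : ZMod p) 4 h t a : ℂ) = (p : ℂ) ^ (t - 1) := by
    rintro hd1
    rw [hd1, show 4 / 4 = 1 from rfl] at hN hi
    rw [hN, ← s1]
    simp only [ind4 hp g hg ho i0 hi, SS]
  have hstq : star (quadraticChar (ZMod p) a0 : ℂ) = (quadraticChar (ZMod p) a0 : ℂ) := by simp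
  have hstp : ∀ k : ℕ, star ((p : ℂ) ^ k) = (p : ℂ) ^ k := by intro k; simp
  refine ⟨?_, ?_, ?_, ?_, ?_, ?_, ?_⟩
  · rintro ⟨hd1, hl1, ht4⟩
    rw [D1 hd1, r1 (by omega), c1 ht4, hρb, re2, hc1]
    rw [mul_comm (Complex.I ^ i0)]
  · rintro ⟨hd1, hl1, ht4⟩
    rw [D1 hd1, r1 (by omega), c3 ht4, hρb, re2, hc2]
    rw [mul_comm (Complex.I ^ i0)]
  · rintro ⟨hd1, hl1⟩
    have ht4 : t % 4 = 2 := by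
      rw [hd1, hl1, Nat.div_one] at hl
      rw [Nat.gcd_comm, Nat.gcd_rec] at hl
      have : t % 4 < 4 := Nat.mod_lt _ (by norm_num)
      generalize t % 4 = r at hl this
      clear * - hl this
      interval_cases r <;> revert hl <;> decide
    rw [D1 hd1, r0 (by omega), c2 ht4, hρb, mul_right_comm (2 : ℂ), re2]
    rw [show (t - 2) / 2 = (t - 2) / 4 + (t - 2) / 4 by omega, pow_add]
    simp only [star_mul', star_neg, hstq, hstp]
    ring
  · rintro ⟨hd1, hl1⟩
    have ht4 : t % 4 = 0 := by
      rw [hd1, hl1, Nat.div_one] at hl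
      have := Nat.gcd_dvd_left t 4
      rw [← hl] at this
      omega
    rw [D1 hd1, r0 (by omega), c0 ht4, re2]
    rw [show (t - 2) / 2 = (t - 4) / 4 + t / 4 by omega, pow_add]
    simp only [star_mul', hstp]
    ring
  · rintro ⟨hd1, hl1⟩
    have ht2 : t % 2 = 1 := by
      by_contra hc
      have h2 : 2 ∣ Nat.gcd t (4 / d) := Nat.dvd_gcd (by omega) (by rw [hd1])
      rw [← hl, hl1] at h2
      omega
    rw [D2 hd1, r1 ht2, hρb]
    ring
  · rintro ⟨hd1, hl1⟩
    have ht2 : t % 2 = 0 := by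
      have := Nat.gcd_dvd_left t (4 / d)
      rw [← hl, hl1] at this
      omega
    rw [D2 hd1, r0 ht2]
  · rintro ⟨hd1, -⟩
    exact D4 hd1

end
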